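/- arXiv:1603.08324 — 2 statements merged into one kernel-verified Lean document; each statement's English description precedes it below -/
import Mathlib

section
/- Let m ≥ 1 and let Ω be a body in ℝ^m. Then the vector-valued integral ∫_Ω |y|^{α−m−2} y dy equals 0 for every real α > 1 if and only if Ω satisfies the balance law at the origin. (Note that for α > 1 the gradient of the r^{α−m}-potential V_Ω^{(α)} at the origin is a nonzero scalar multiple of ∫_Ω |y|^{α−m−2} y dy, so this says that the origin is a critical point of V_Ω^{(α)} for every α > 1 if and only if Ω satisfies the balance law at the origin.) -/
open MeasureTheory Metric Set

noncomputable section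

/-- A body in `ℝ^m`: the closure of a bounded open set. -/
def IsBody {m : ℕ} (Ω : Set (EuclideanSpace ℝ (Fin m))) : Prop :=
  ∃ U : Set (EuclideanSpace ℝ (Fin m)),
    IsOpen U ∧ Bornology.IsBounded U ∧ Ω = closure U

/-- `Ω` satisfies the balance law at the origin: for almost every `r ≥ 0`, the
vector-valued integral of `χ_Ω(r v) • v` over the unit sphere (with respect to the
surface, i.e. `(m-1)`-dimensional Hausdorff, measure) vanishes. -/
def SatisfiesBalanceLaw {m : ℕ} (Ω : Set (EuclideanSpace ℝ (Fin m))) : Prop :=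
  ∀ᵐ r ∂(volume.restrict (Ici (0 : ℝ))),
    (∫ v in sphere (0 : EuclideanSpace ℝ (Fin m)) 1,
      (Ω.indicator (fun _ => (1 : ℝ)) (r • v)) • v ∂(μH[(m : ℝ) - 1])) = 0

/-!
In polar coordinates `∫_Ω ‖y‖^(α-m-2) y dy = ∫_0^∞ r^(α-2) F(r) dr`, where `F(r)` is the integral of
`χ_Ω(r v) v` over the unit sphere. Since `F` is bounded and vanishes for large `r`, the exponents
`α = 2, 3, 4, …` say that all moments of `F` vanish, which by Weierstrass approximation forces
`F = 0` almost everywhere.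

The surface measure of polar coordinates and Hausdorff measure on the sphere agree up to a nonzero
factor, because a finite orthogonally invariant measure on the unit sphere is unique up to scaling:
its characteristic function is radial, so integrating `exp (i r ⟪v, w⟫)` over two such measures in
either order shows that their characteristic functions are proportional. Hausdorff measure is finite
on the sphere since stereographic projection parametrizes each hemisphere by a compact subset of a
hyperplane, and nonzero since orthogonal projection onto a hyperplane is `1`-Lipschitz and maps the
sphere onto a set containing a ball.
-/

section Moments

open scoped ContDiff

variable {F : Type*} [NormedAddCommGroup F] [NormedSpace ℝ F]
  {μ : Measure ℝ} {a b : ℝ} {f : ℝ → F}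

lemma setIntegral_polynomial_eval_smul_eq_zero (hf : IntegrableOn f (Icc a b) μ)
    (hmom : ∀ k : ℕ, ∫ x in Icc a b, x ^ k • f x ∂μ = 0) (p : Polynomial ℝ) :
    ∫ x in Icc a b, p.eval x • f x ∂μ = 0 := by
  simp only [Polynomial.eval_eq_sum_range, Finset.sum_smul, mul_smul]
  rw [integral_finsetSum]
  · simp only [integral_smul, hmom, smul_zero, Finset.sum_const_zero]
  · intro k _
    exact (hf.continuousOn_smul (continuous_pow k).continuousOn isCompact_Icc).smul (p.coeff k)

lemma setIntegral_continuousOn_smul_eq_zero (hf : IntegrableOn f (Icc a b) μ)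
    (hmom : ∀ k : ℕ, ∫ x in Icc a b, x ^ k • f x ∂μ = 0) {g : ℝ → ℝ}
    (hg : ContinuousOn g (Icc a b)) : ∫ x in Icc a b, g x • f x ∂μ = 0 := by
  have hbound : ∀ ε > 0, ‖∫ x in Icc a b, g x • f x ∂μ‖ ≤ ε * ∫ x in Icc a b, ‖f x‖ ∂μ := by
    intro ε hε
    obtain ⟨p, hp⟩ := exists_polynomial_near_of_continuousOn a b g hg ε hε
    have hsub : ∫ x in Icc a b, g x • f x ∂μ = ∫ x in Icc a b, (g x - p.eval x) • f x ∂μ := by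
      simp only [sub_smul]
      rw [integral_sub (hf.continuousOn_smul hg isCompact_Icc)
        (hf.continuousOn_smul p.continuous.continuousOn isCompact_Icc),
        setIntegral_polynomial_eval_smul_eq_zero hf hmom, sub_zero]
    rw [hsub, ← integral_const_mul]
    refine norm_integral_le_of_norm_le (hf.norm.const_mul ε) ?_
    filter_upwards [ae_restrict_mem measurableSet_Icc] with x hx
    rw [norm_smul, Real.norm_eq_abs, abs_sub_comm]
    exact mul_le_mul_of_nonneg_right (hp x hx).le (norm_nonneg _)
  have hlim : Filter.Tendsto (fun ε : ℝ ↦ ε * ∫ x in Icc a b, ‖f x‖ ∂μ)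
      (nhdsWithin 0 (Ioi 0)) (nhds 0) := by
    simpa only [zero_mul] using
      ((continuous_mul_const (∫ x in Icc a b, ‖f x‖ ∂μ)).tendsto 0).mono_left nhdsWithin_le_nhds
  exact norm_le_zero_iff.1 (ge_of_tendsto hlim (eventually_mem_nhdsWithin.mono hbound))

lemma ae_eq_zero_of_forall_setIntegral_pow_smul_eq_zero [CompleteSpace F]
    (hf : IntegrableOn f (Icc a b) μ)
    (hmom : ∀ k : ℕ, ∫ x in Icc a b, x ^ k • f x ∂μ = 0) :
    ∀ᵐ x ∂μ.restrict (Icc a b), f x = 0 :=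
  ae_eq_zero_of_integral_contDiff_smul_eq_zero hf.locallyIntegrable fun _ hg _ ↦
    setIntegral_continuousOn_smul_eq_zero hf hmom hg.continuous.continuousOn

end Moments

/-- Invariance of a measure under all linear isometries: the property that singles out the surface
measure among the finite measures on the unit sphere, up to a scalar factor. -/
def IsOrthogonallyInvariant {E : Type*} [NormedAddCommGroup E] [NormedSpace ℝ E]
    [MeasurableSpace E] (μ : Measure E) : Prop :=
  ∀ e : E ≃ₗᵢ[ℝ] E, MeasurePreserving e μ μ

section Uniqueness

open scoped NNReal

variable {E : Type*} [NormedAddCommGroup E] [InnerProductSpace ℝ E] [MeasurableSpace E]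
  [BorelSpace E] {μ ν : Measure E}

lemma IsOrthogonallyInvariant.charFun_eq_of_norm_eq (hμ : IsOrthogonallyInvariant μ) {s t : E}
    (hst : ‖s‖ = ‖t‖) : charFun μ s = charFun μ t := by
  let e := (ℝ ∙ (s - t))ᗮ.reflection
  have hes : e s = t := Submodule.reflection_sub hst
  rw [← hes, charFun_apply, charFun_apply, ← (hμ e).integral_comp
    e.toHomeomorph.measurableEmbedding fun x ↦ Complex.exp (inner ℝ x (e s) * Complex.I)]
  simp only [LinearIsometryEquiv.inner_map_map]

lemma IsOrthogonallyInvariant.integral_charFun_smul (hμ : IsOrthogonallyInvariant μ)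
    (hν : ∀ᵐ v ∂ν, ‖v‖ = 1) (t : E) :
    ∫ v, charFun μ (‖t‖ • v) ∂ν = ν.real univ • charFun μ t := by
  rw [← integral_const]
  refine integral_congr_ae ?_
  filter_upwards [hν] with v hv
  exact hμ.charFun_eq_of_norm_eq (by rw [norm_smul, norm_norm, hv, mul_one])

lemma integral_charFun_smul_comm [SecondCountableTopology E] [IsFiniteMeasure μ]
    [IsFiniteMeasure ν] (r : ℝ) :
    ∫ v, charFun μ (r • v) ∂ν = ∫ w, charFun ν (r • w) ∂μ := by
  simp only [charFun_apply]
  rw [integral_integral_swap]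
  · simp only [real_inner_smul_right, real_inner_comm]
  · refine Integrable.of_bound (by fun_prop) 1 (.of_forall fun p ↦ ?_)
    exact (Complex.norm_exp_ofReal_mul_I _).le

lemma IsOrthogonallyInvariant.measureUnivNNReal_smul_comm [SecondCountableTopology E]
    [CompleteSpace E] [IsFiniteMeasure μ] [IsFiniteMeasure ν] (hμ : IsOrthogonallyInvariant μ)
    (hν : IsOrthogonallyInvariant ν) (hμ_norm : ∀ᵐ v ∂μ, ‖v‖ = 1) (hν_norm : ∀ᵐ v ∂ν, ‖v‖ = 1) :
    measureUnivNNReal ν • μ = measureUnivNNReal μ • ν := by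
  refine Measure.ext_of_charFun (funext fun t ↦ ?_)
  have hcomm : ν.real univ • charFun μ t = μ.real univ • charFun ν t := by
    rw [← hμ.integral_charFun_smul hν_norm, ← hν.integral_charFun_smul hμ_norm,
      integral_charFun_smul_comm]
  simp only [charFun_apply, integral_smul_nnreal_measure] at hcomm ⊢
  exact hcomm

lemma IsOrthogonallyInvariant.exists_eq_smul [SecondCountableTopology E] [CompleteSpace E]
    [IsFiniteMeasure μ] [IsFiniteMeasure ν] (hμ : IsOrthogonallyInvariant μ)
    (hν : IsOrthogonallyInvariant ν) (hμ_norm : ∀ᵐ v ∂μ, ‖v‖ = 1) (hν_norm : ∀ᵐ v ∂ν, ‖v‖ = 1)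
    (hμ_zero : μ ≠ 0) (hν_zero : ν ≠ 0) : ∃ c : ℝ≥0, c ≠ 0 ∧ μ = c • ν := by
  have hμ_univ : measureUnivNNReal μ ≠ 0 := measureUnivNNReal_eq_zero.not.2 hμ_zero
  have hν_univ : measureUnivNNReal ν ≠ 0 := measureUnivNNReal_eq_zero.not.2 hν_zero
  refine ⟨(measureUnivNNReal ν)⁻¹ * measureUnivNNReal μ,
    mul_ne_zero (inv_ne_zero hν_univ) hμ_univ, ?_⟩
  rw [mul_smul, ← hμ.measureUnivNNReal_smul_comm hν hμ_norm hν_norm, inv_smul_smul₀ hν_univ]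

end Uniqueness

section HausdorffSphere

open Module
open scoped RealInnerProductSpace

lemma hausdorffMeasure_image_lt_top {E X : Type*} [NormedAddCommGroup E] [NormedSpace ℝ E]
    [FiniteDimensional ℝ E] [MeasurableSpace E] [BorelSpace E] [MetricSpace X] [MeasurableSpace X]
    [BorelSpace X] {f : E → X} (hf : LocallyLipschitz f) {K : Set E} (hK : IsCompact K) :
    μH[finrank ℝ E] (f '' K) < ⊤ := by
  obtain ⟨C, hC⟩ := (hf.locallyLipschitzOn (s := K)).exists_lipschitzOnWith_of_compact hK
  refine (hC.hausdorffMeasure_image_le (Nat.cast_nonneg _)).trans_lt ?_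
  exact ENNReal.mul_lt_top (ENNReal.rpow_lt_top_of_nonneg (Nat.cast_nonneg _) ENNReal.coe_ne_top)
    hK.measure_lt_top

variable {E : Type*} [NormedAddCommGroup E] [InnerProductSpace ℝ E]

lemma hemisphere_subset_image_stereoInvFunAux {v : E} (hv : ‖v‖ = 1) :
    sphere 0 1 ∩ {x | ⟪v, x⟫ ≤ 0} ⊆
      (fun w : (ℝ ∙ v)ᗮ ↦ stereoInvFunAux v w) '' closedBall 0 2 := by
  rintro x ⟨hx, hvx : ⟪v, x⟫ ≤ 0⟩
  have hxv : x ≠ v := by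
    rintro rfl
    rw [real_inner_self_eq_norm_sq, hv] at hvx
    norm_num at hvx
  refine ⟨stereoToFun v x, ?_, congrArg Subtype.val (stereo_left_inv hv (x := ⟨x, hx⟩) hxv)⟩
  have hproj : ‖(ℝ ∙ v)ᗮ.orthogonalProjectionOnto x‖ ≤ 1 :=
    ((ℝ ∙ v)ᗮ.norm_orthogonalProjectionOnto_apply_le x).trans (mem_sphere_zero_iff_norm.1 hx).le
  have hscale : 2 / (1 - ⟪v, x⟫) ≤ 2 := div_le_self zero_le_two (by linarith)
  have hscale_nonneg : 0 ≤ 2 / (1 - ⟪v, x⟫) := div_nonneg zero_le_two (by linarith)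
  rw [mem_closedBall_zero_iff, stereoToFun_apply, innerSL_apply_apply, norm_smul,
    Real.norm_of_nonneg hscale_nonneg]
  simpa only [mul_one] using mul_le_mul hscale hproj (norm_nonneg _) zero_le_two

lemma ball_subset_orthogonalProjectionOnto_image_sphere {v : E} (hv : ‖v‖ = 1) :
    ball 0 1 ⊆ (ℝ ∙ v)ᗮ.orthogonalProjectionOnto '' sphere 0 1 := by
  intro w hw
  rw [mem_ball_zero_iff] at hw
  have hvw : ⟪v, (w : E)⟫ = 0 := Submodule.mem_orthogonal_singleton_iff_inner_right.1 w.2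
  refine ⟨w + √(1 - ‖w‖ ^ 2) • v, ?_, ?_⟩
  · have hsq : ‖(w : E) + √(1 - ‖w‖ ^ 2) • v‖ ^ 2 = 1 := by
      rw [norm_add_sq_real, real_inner_smul_right, real_inner_comm, hvw, norm_smul, hv, mul_one,
        Real.norm_eq_abs, sq_abs, Real.sq_sqrt (by nlinarith [norm_nonneg w]),
        Submodule.coe_norm]
      ring
    exact mem_sphere_zero_iff_norm.2 ((pow_eq_one_iff_of_nonneg (norm_nonneg _) two_ne_zero).1 hsq)
  · rw [map_add, map_smul, Submodule.orthogonalProjectionOnto_mem_subspace_eq_self,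
      Submodule.orthogonalProjectionOnto_orthogonalComplement_singleton_eq_zero, smul_zero,
      add_zero]

variable [MeasurableSpace E] [BorelSpace E]

lemma isOrthogonallyInvariant_hausdorffMeasure_restrict_sphere (d r : ℝ) :
    IsOrthogonallyInvariant ((μH[d] : Measure E).restrict (sphere 0 r)) := by
  intro e
  have hsphere : e ⁻¹' sphere 0 r = sphere 0 r := by
    rw [e.preimage_sphere, map_zero]
  have hrestrict := (e.toIsometryEquiv.measurePreserving_hausdorffMeasure d).restrict_preimage
    (isClosed_sphere (x := (0 : E)) (ε := r)).measurableSet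
  rwa [e.coe_toIsometryEquiv, hsphere] at hrestrict

variable (E) {n : ℕ} [Fact (finrank ℝ E = n + 1)]

lemma hausdorffMeasure_unitSphere_lt_top : μH[n] (sphere (0 : E) 1) < ⊤ := by
  have : FiniteDimensional ℝ E := .of_fact_finrank_eq_succ n
  have : Nontrivial E := nontrivial_of_finrank_eq_succ (R := ℝ) (n := n) Fact.out
  have hhemisphere {v : E} (hv : ‖v‖ = 1) : μH[n] (sphere 0 1 ∩ {x | ⟪v, x⟫ ≤ 0}) < ⊤ := by
    have hdim : finrank ℝ (ℝ ∙ v)ᗮ = n :=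
      Submodule.finrank_orthogonal_span_singleton (norm_ne_zero_iff.1 (hv ▸ one_ne_zero))
    have hsmooth : ContDiff ℝ 1 fun w : (ℝ ∙ v)ᗮ ↦ stereoInvFunAux v w :=
      contDiff_stereoInvFunAux.comp (ℝ ∙ v)ᗮ.subtypeL.contDiff
    refine (measure_mono (hemisphere_subset_image_stereoInvFunAux hv)).trans_lt ?_
    simpa only [hdim] using
      hausdorffMeasure_image_lt_top hsmooth.locallyLipschitz (isCompact_closedBall 0 2)
  obtain ⟨v, hv⟩ : (sphere (0 : E) 1).Nonempty := NormedSpace.sphere_nonempty.2 zero_le_one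
  rw [mem_sphere_zero_iff_norm] at hv
  have hcover : sphere (0 : E) 1 ⊆
      sphere 0 1 ∩ {x | ⟪v, x⟫ ≤ 0} ∪ sphere 0 1 ∩ {x | ⟪-v, x⟫ ≤ 0} := by
    intro x hx
    rcases le_total ⟪v, x⟫ 0 with h | h
    · exact .inl ⟨hx, h⟩
    · exact .inr ⟨hx, (inner_neg_left v x).trans_le (neg_nonpos.2 h)⟩
  exact (measure_mono hcover).trans_lt
    (measure_union_lt_top (hhemisphere hv) (hhemisphere (by rwa [norm_neg])))

lemma hausdorffMeasure_unitSphere_ne_zero : μH[n] (sphere (0 : E) 1) ≠ 0 := by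
  have : FiniteDimensional ℝ E := .of_fact_finrank_eq_succ n
  have : Nontrivial E := nontrivial_of_finrank_eq_succ (R := ℝ) (n := n) Fact.out
  obtain ⟨v, hv⟩ : (sphere (0 : E) 1).Nonempty := NormedSpace.sphere_nonempty.2 zero_le_one
  rw [mem_sphere_zero_iff_norm] at hv
  have hdim : finrank ℝ (ℝ ∙ v)ᗮ = n :=
    Submodule.finrank_orthogonal_span_singleton (norm_ne_zero_iff.1 (hv ▸ one_ne_zero))
  have hpos : 0 < μH[n] (ball (0 : (ℝ ∙ v)ᗮ) 1) := by
    simpa only [hdim] using measure_ball_pos μH[finrank ℝ (ℝ ∙ v)ᗮ] (0 : (ℝ ∙ v)ᗮ) one_pos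
  have hle : μH[n] (ball (0 : (ℝ ∙ v)ᗮ) 1) ≤ μH[n] (sphere (0 : E) 1) :=
    (measure_mono (ball_subset_orthogonalProjectionOnto_image_sphere hv)).trans
      (hausdorffMeasure_orthogonalProjectionOnto_le _ _ _ (Nat.cast_nonneg n))
  exact (hpos.trans_le hle).ne'

end HausdorffSphere

section PolarCoordinates

open Module
open scoped Pointwise

variable {E F : Type*} [NormedAddCommGroup E] [NormedSpace ℝ E] [MeasurableSpace E]
  [NormedAddCommGroup F] [NormedSpace ℝ F]

lemma integral_volumeIoiPow (n : ℕ) (g : ℝ → F) :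
    ∫ r, g r ∂Measure.volumeIoiPow n = ∫ r in Ioi (0 : ℝ), r ^ n • g r := by
  have hdensity : Measurable fun r : Ioi (0 : ℝ) ↦ (r.1 ^ n).toNNReal :=
    (measurable_subtype_coe.pow_const n).real_toNNReal
  calc
    ∫ r, g r ∂Measure.volumeIoiPow n
      = ∫ r : Ioi (0 : ℝ), (r.1 ^ n).toNNReal • g r ∂volume.comap Subtype.val :=
        integral_withDensity_eq_integral_smul hdensity fun r ↦ g r
    _ = ∫ r in Ioi (0 : ℝ), (r ^ n).toNNReal • g r :=
        integral_subtype_comap measurableSet_Ioi fun r : ℝ ↦ (r ^ n).toNNReal • g r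
    _ = ∫ r in Ioi (0 : ℝ), r ^ n • g r := setIntegral_congr_fun measurableSet_Ioi fun r hr ↦ by
        rw [NNReal.smul_def, Real.coe_toNNReal _ (pow_nonneg (mem_Ioi.1 hr).le n)]

/-- The surface measure of polar coordinates, `Measure.toSphere`, regarded as a measure on the
ambient space, where it can be compared with Hausdorff measure. -/
def sphereMeasure (μ : Measure E) : Measure E :=
  μ.toSphere.map (↑)

variable [BorelSpace E] {μ : Measure E}

lemma sphereMeasure_apply {s : Set E} (hs : MeasurableSet s) :
    sphereMeasure μ s = finrank ℝ E * μ (Ioo (0 : ℝ) 1 • (s ∩ sphere 0 1)) := by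
  rw [sphereMeasure, Measure.map_apply measurable_subtype_coe hs,
    Measure.toSphere_apply' _ (measurable_subtype_coe hs), Subtype.image_preimage_coe, inter_comm]

lemma sphereMeasure_ae_norm_eq_one (μ : Measure E) : ∀ᵐ v ∂sphereMeasure μ, ‖v‖ = 1 := by
  rw [sphereMeasure, ae_map_iff measurable_subtype_coe.aemeasurable
    (measurableSet_eq_fun measurable_norm measurable_const)]
  exact .of_forall norm_eq_of_mem_sphere

lemma IsOrthogonallyInvariant.sphereMeasure (hμ : IsOrthogonallyInvariant μ) :
    IsOrthogonallyInvariant (sphereMeasure μ) := by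
  intro e
  refine ⟨e.continuous.measurable, Measure.ext fun s hs ↦ ?_⟩
  have hcone : e ⁻¹' (Ioo (0 : ℝ) 1 • (s ∩ sphere 0 1)) =
      Ioo (0 : ℝ) 1 • (e ⁻¹' s ∩ sphere 0 1) := by
    have himage : e.symm '' (Ioo (0 : ℝ) 1 • (s ∩ sphere 0 1)) =
        Ioo (0 : ℝ) 1 • (e.symm '' (s ∩ sphere 0 1)) := image_image2_distrib_right e.symm.map_smul
    rwa [e.symm.image_eq_preimage_symm, e.symm.image_eq_preimage_symm, e.symm_symm,
      preimage_inter, e.preimage_sphere, map_zero] at himage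
  rw [Measure.map_apply e.continuous.measurable hs, sphereMeasure_apply hs,
    sphereMeasure_apply (e.continuous.measurable hs), ← hcone,
    (hμ e).measure_preimage_emb e.toHomeomorph.measurableEmbedding]

variable [FiniteDimensional ℝ E] [μ.IsAddHaarMeasure]

instance : IsFiniteMeasure (sphereMeasure μ) :=
  inferInstanceAs (IsFiniteMeasure (μ.toSphere.map _))

lemma sphereMeasure_ne_zero [Nontrivial E] : sphereMeasure μ ≠ 0 :=
  (Measure.map_ne_zero_iff measurable_subtype_coe.aemeasurable).2 μ.toSphere_ne_zero

lemma integral_eq_integral_Ioi_integral_sphereMeasure [Nontrivial E] {f : E → F}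
    (hf : Integrable f μ) :
    ∫ y, f y ∂μ = ∫ r in Ioi (0 : ℝ), r ^ (finrank ℝ E - 1) • ∫ v, f (r • v) ∂sphereMeasure μ := by
  let g : sphere (0 : E) 1 × Ioi (0 : ℝ) → F := fun p ↦ f (p.2.1 • p.1.1)
  have hcomp : g ∘ homeomorphUnitSphereProd E = f ∘ (↑) := funext fun x ↦
    congrArg (f ∘ Subtype.val) ((homeomorphUnitSphereProd E).symm_apply_apply x)
  have hpolar := μ.measurePreserving_homeomorphUnitSphereProd
  have hemb := (homeomorphUnitSphereProd E).measurableEmbedding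
  have hg : Integrable g (μ.toSphere.prod (.volumeIoiPow (finrank ℝ E - 1))) := by
    rw [← hpolar.integrable_comp_emb hemb, hcomp,
      ← integrableOn_iff_comap_subtypeVal (measurableSet_singleton _).compl]
    exact hf.integrableOn
  calc
    ∫ y, f y ∂μ = ∫ x : ({0}ᶜ : Set E), f x ∂μ.comap (↑) := by
      rw [integral_subtype_comap (measurableSet_singleton _).compl f, restrict_compl_singleton]
    _ = ∫ p, g p ∂μ.toSphere.prod (.volumeIoiPow (finrank ℝ E - 1)) := by
      rw [← hpolar.integral_comp hemb]
      exact congrArg (fun h ↦ ∫ x, h x ∂μ.comap (↑)) hcomp.symm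
    _ = ∫ r, ∫ v : sphere (0 : E) 1, f (r.1 • v.1) ∂μ.toSphere
          ∂.volumeIoiPow (finrank ℝ E - 1) := integral_prod_symm _ hg
    _ = ∫ r, ∫ v, f (r.1 • v) ∂sphereMeasure μ ∂.volumeIoiPow (finrank ℝ E - 1) := by
      simp only [sphereMeasure,
        (MeasurableEmbedding.subtype_coe isClosed_sphere.measurableSet).integral_map]
    _ = ∫ r in Ioi (0 : ℝ), r ^ (finrank ℝ E - 1) • ∫ v, f (r • v) ∂sphereMeasure μ :=
      integral_volumeIoiPow _ fun r ↦ ∫ v, f (r • v) ∂sphereMeasure μ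

end PolarCoordinates

section SphereMoment

variable {E : Type*} [NormedAddCommGroup E] [NormedSpace ℝ E] [MeasurableSpace E]
  {σ : Measure E} {Ω : Set E}

/-- The first moment of the radius-`r` slice of `Ω`, pulled back to the unit sphere. The measure `σ`
is a parameter because the balance law uses Hausdorff measure while polar coordinates
produce `sphereMeasure`. -/
def sphereMoment (σ : Measure E) (Ω : Set E) (r : ℝ) : E :=
  ∫ v, Ω.indicator (fun _ ↦ (1 : ℝ)) (r • v) • v ∂σ

lemma sphereMoment_smul_measure (c : NNReal) (r : ℝ) :
    sphereMoment (c • σ) Ω r = c • sphereMoment σ Ω r :=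
  integral_smul_nnreal_measure _ c

lemma norm_sphereMoment_le [IsFiniteMeasure σ] (hσ : ∀ᵐ v ∂σ, ‖v‖ = 1) (r : ℝ) :
    ‖sphereMoment σ Ω r‖ ≤ σ.real univ := by
  rw [← one_mul (σ.real univ)]
  refine norm_integral_le_of_norm_le_const ?_
  filter_upwards [hσ] with v hv
  rw [norm_smul, hv, mul_one]
  exact (norm_indicator_le_norm_self _ _).trans norm_one.le

lemma sphereMoment_eq_zero_of_subset_ball {R r : ℝ} (hΩ : Ω ⊆ ball 0 R) (hσ : ∀ᵐ v ∂σ, ‖v‖ = 1)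
    (hr : R ≤ r) : sphereMoment σ Ω r = 0 := by
  refine integral_eq_zero_of_ae ?_
  filter_upwards [hσ] with v hv
  have hnotMem : r • v ∉ Ω := fun hmem ↦ by
    have hlt := mem_ball_zero_iff.1 (hΩ hmem)
    rw [norm_smul, hv, mul_one] at hlt
    exact (hr.trans (Real.le_norm_self r)).not_gt hlt
  rw [indicator_of_notMem hnotMem, zero_smul, Pi.zero_apply]

lemma stronglyMeasurable_sphereMoment [SecondCountableTopology E] [BorelSpace E] [SFinite σ]
    (hΩ : MeasurableSet Ω) : StronglyMeasurable (sphereMoment σ Ω) := by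
  have hindicator : Measurable (Ω.indicator fun _ ↦ (1 : ℝ)) := measurable_const.indicator hΩ
  exact StronglyMeasurable.integral_prod_right
    ((hindicator.comp (measurable_fst.smul measurable_snd)).smul measurable_snd).stronglyMeasurable

lemma ae_sphereMoment_eq_zero_of_forall_integral_pow_smul_eq_zero [CompleteSpace E]
    [SecondCountableTopology E] [BorelSpace E] [IsFiniteMeasure σ] (hΩ : MeasurableSet Ω)
    (hb : Bornology.IsBounded Ω) (hσ : ∀ᵐ v ∂σ, ‖v‖ = 1)
    (hmom : ∀ k : ℕ, ∫ r in Ioi (0 : ℝ), r ^ k • sphereMoment σ Ω r = 0) :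
    ∀ᵐ r ∂volume.restrict (Ici (0 : ℝ)), sphereMoment σ Ω r = 0 := by
  obtain ⟨R, hR⟩ := hb.subset_ball 0
  have hint : IntegrableOn (sphereMoment σ Ω) (Icc 0 R) :=
    .of_bound measure_Icc_lt_top (stronglyMeasurable_sphereMoment hΩ).aestronglyMeasurable
      (σ.real univ) (.of_forall (norm_sphereMoment_le hσ))
  have hmom_Icc (k : ℕ) : ∫ r in Icc 0 R, r ^ k • sphereMoment σ Ω r = 0 := by
    rw [← hmom k, ← integral_Ici_eq_integral_Ioi]
    refine (setIntegral_eq_of_subset_of_forall_sdiff_eq_zero measurableSet_Ici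
      Icc_subset_Ici_self fun r hr ↦ ?_).symm
    have hRr : R ≤ r := (not_le.1 fun hle ↦ hr.2 ⟨hr.1, hle⟩).le
    rw [sphereMoment_eq_zero_of_subset_ball hR hσ hRr, smul_zero]
  have hae := ae_eq_zero_of_forall_setIntegral_pow_smul_eq_zero hint hmom_Icc
  rw [ae_restrict_iff' measurableSet_Icc] at hae
  rw [ae_restrict_iff' measurableSet_Ici]
  filter_upwards [hae] with r hr hr0
  rcases le_total r R with hrR | hRr
  · exact hr ⟨hr0, hrR⟩
  · exact sphereMoment_eq_zero_of_subset_ball hR hσ hRr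

end SphereMoment

section RadialWeights

open Module

variable {E : Type*} [NormedAddCommGroup E] [NormedSpace ℝ E] [FiniteDimensional ℝ E]
  [Nontrivial E] [MeasurableSpace E] [BorelSpace E] {μ : Measure E} [μ.IsAddHaarMeasure] {Ω : Set E}

lemma setIntegral_fun_norm_smul_eq (hΩ : MeasurableSet Ω) {φ : ℝ → ℝ}
    (hφ : IntegrableOn (fun y ↦ φ ‖y‖ • y) Ω μ) :
    ∫ y in Ω, φ ‖y‖ • y ∂μ =
      ∫ r in Ioi 0, (r ^ finrank ℝ E * φ r) • sphereMoment (sphereMeasure μ) Ω r := by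
  rw [← integral_indicator hΩ,
    integral_eq_integral_Ioi_integral_sphereMeasure ((integrable_indicator_iff hΩ).2 hφ)]
  refine setIntegral_congr_fun measurableSet_Ioi fun r (hr : 0 < r) ↦ ?_
  have hslice : ∫ v, Ω.indicator (fun y ↦ φ ‖y‖ • y) (r • v) ∂sphereMeasure μ =
      (φ r * r) • sphereMoment (sphereMeasure μ) Ω r := by
    rw [sphereMoment, ← integral_smul]
    refine integral_congr_ae ?_
    filter_upwards [sphereMeasure_ae_norm_eq_one μ] with v hv
    have hnorm : ‖r • v‖ = r := by rw [norm_smul, hv, mul_one, Real.norm_of_nonneg hr.le]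
    by_cases hmem : r • v ∈ Ω
    · simp only [indicator_of_mem hmem, hnorm, one_smul, smul_smul]
    · simp only [indicator_of_notMem hmem, zero_smul, smul_zero]
  simp only [hslice, smul_smul]
  rw [mul_comm (φ r), ← mul_assoc, pow_sub_one_mul finrank_pos.ne']

lemma integrableOn_norm_rpow_smul {s : ℝ} (hs : -(finrank ℝ E + 1) < s)
    (hΩ : Bornology.IsBounded Ω) : IntegrableOn (fun y ↦ ‖y‖ ^ s • y) Ω μ := by
  obtain ⟨R, hR, hΩR⟩ := hΩ.subset_ball_lt 0 0
  have hradial : IntegrableOn (fun t : ℝ ↦ t ^ (finrank ℝ E - 1) • (t ^ s * t)) (Ioo 0 R) := by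
    have hrpow : IntegrableOn (fun t : ℝ ↦ t ^ (finrank ℝ E + s)) (Ioo 0 R) :=
      (intervalIntegral.integrableOn_Ioo_rpow_iff hR).2 (by linarith)
    refine hrpow.congr_fun (fun t ht ↦ ?_) measurableSet_Ioo
    simp only [smul_eq_mul]
    rw [mul_comm (t ^ s), ← mul_assoc, pow_sub_one_mul finrank_pos.ne', Real.rpow_add ht.1,
      Real.rpow_natCast]
  have hnorm : IntegrableOn (fun y : E ↦ ‖y‖ ^ s * ‖y‖) (ball 0 R) μ :=
    (integrableOn_fun_norm_addHaar μ).2 hradial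
  refine IntegrableOn.mono_set (hnorm.mono' (by fun_prop) (.of_forall fun y ↦ ?_)) hΩR
  rw [norm_smul, Real.norm_of_nonneg (Real.rpow_nonneg (norm_nonneg y) s)]

lemma setIntegral_norm_rpow_smul_eq (hΩ : MeasurableSet Ω) (hb : Bornology.IsBounded Ω) {α : ℝ}
    (hα : 1 < α) :
    ∫ y in Ω, ‖y‖ ^ (α - finrank ℝ E - 2) • y ∂μ =
      ∫ r in Ioi 0, r ^ (α - 2) • sphereMoment (sphereMeasure μ) Ω r := by
  rw [setIntegral_fun_norm_smul_eq hΩ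
    (φ := fun t ↦ t ^ (α - finrank ℝ E - 2)) (integrableOn_norm_rpow_smul (by linarith) hb)]
  refine setIntegral_congr_fun measurableSet_Ioi fun r (hr : 0 < r) ↦ ?_
  rw [← Real.rpow_natCast, ← Real.rpow_add hr, sub_right_comm, add_sub_cancel]

lemma forall_setIntegral_norm_rpow_smul_eq_zero_iff (hΩ : MeasurableSet Ω)
    (hb : Bornology.IsBounded Ω) :
    (∀ α : ℝ, 1 < α → ∫ y in Ω, ‖y‖ ^ (α - finrank ℝ E - 2) • y ∂μ = 0) ↔
      ∀ᵐ r ∂volume.restrict (Ici (0 : ℝ)), sphereMoment (sphereMeasure μ) Ω r = 0 := by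
  refine ⟨fun h ↦ ?_, fun h α hα ↦ ?_⟩
  · refine ae_sphereMoment_eq_zero_of_forall_integral_pow_smul_eq_zero hΩ hb
      (sphereMeasure_ae_norm_eq_one μ) fun k ↦ ?_
    have hk : (1 : ℝ) < k + 2 := by linarith [Nat.cast_nonneg (α := ℝ) k]
    simpa only [setIntegral_norm_rpow_smul_eq hΩ hb hk, add_sub_cancel_right, Real.rpow_natCast]
      using h (k + 2) hk
  · rw [setIntegral_norm_rpow_smul_eq hΩ hb hα]
    refine integral_eq_zero_of_ae ?_
    filter_upwards [ae_restrict_of_ae_restrict_of_subset Ioi_subset_Ici_self h] with r hr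
    rw [hr, smul_zero, Pi.zero_apply]

end RadialWeights

section BalanceLaw

open Module
open scoped NNReal

lemma exists_hausdorffMeasure_restrict_unitSphere_eq_smul {E : Type*} [NormedAddCommGroup E]
    [InnerProductSpace ℝ E] [MeasurableSpace E] [BorelSpace E] {n : ℕ}
    [Fact (finrank ℝ E = n + 1)] {μ : Measure E} [μ.IsAddHaarMeasure]
    (hμ : IsOrthogonallyInvariant μ) :
    ∃ c : ℝ≥0, c ≠ 0 ∧ μH[n].restrict (sphere (0 : E) 1) = c • sphereMeasure μ := by
  have : FiniteDimensional ℝ E := .of_fact_finrank_eq_succ n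
  have : Nontrivial E := nontrivial_of_finrank_eq_succ (R := ℝ) (n := n) Fact.out
  have : IsFiniteMeasure (μH[n].restrict (sphere (0 : E) 1)) :=
    isFiniteMeasure_restrict.2 (hausdorffMeasure_unitSphere_lt_top E).ne
  have hnorm : ∀ᵐ v ∂μH[n].restrict (sphere (0 : E) 1), ‖v‖ = 1 :=
    (ae_restrict_mem isClosed_sphere.measurableSet).mono fun _ ↦ mem_sphere_zero_iff_norm.1
  exact (isOrthogonallyInvariant_hausdorffMeasure_restrict_sphere n 1).exists_eq_smul
    hμ.sphereMeasure hnorm (sphereMeasure_ae_norm_eq_one μ)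
    (Measure.restrict_eq_zero.not.2 (hausdorffMeasure_unitSphere_ne_zero E)) sphereMeasure_ne_zero

lemma satisfiesBalanceLaw_iff_ae_sphereMoment_eq_zero {m : ℕ} (hm : 1 ≤ m)
    {Ω : Set (EuclideanSpace ℝ (Fin m))} : SatisfiesBalanceLaw Ω ↔
      ∀ᵐ r ∂volume.restrict (Ici (0 : ℝ)), sphereMoment (sphereMeasure volume) Ω r = 0 := by
  obtain ⟨n, rfl⟩ := Nat.exists_eq_add_of_le' hm
  have : Fact (finrank ℝ (EuclideanSpace ℝ (Fin (n + 1))) = n + 1) :=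
    ⟨finrank_euclideanSpace_fin⟩
  obtain ⟨c, hc, hσ⟩ := exists_hausdorffMeasure_restrict_unitSphere_eq_smul (n := n)
    (μ := (volume : Measure (EuclideanSpace ℝ (Fin (n + 1))))) fun e ↦ e.measurePreserving
  have hmoment (r : ℝ) :
      sphereMoment (μH[((n + 1 : ℕ) : ℝ) - 1].restrict (sphere 0 1)) Ω r = 0 ↔
        sphereMoment (sphereMeasure volume) Ω r = 0 := by
    rw [Nat.cast_add_one, add_sub_cancel_right, hσ, sphereMoment_smul_measure,
      smul_eq_zero_iff_right hc]
  exact Filter.eventually_congr (.of_forall hmoment)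

end BalanceLaw

theorem stmt0_general {m : ℕ} (hm : 1 ≤ m) {Ω : Set (EuclideanSpace ℝ (Fin m))}
    (hΩ : MeasurableSet Ω) (hb : Bornology.IsBounded Ω) :
    (∀ α : ℝ, 1 < α →
      (∫ y in Ω, (‖y‖ ^ (α - m - 2) : ℝ) • y) = 0) ↔
    SatisfiesBalanceLaw Ω := by
  have : Nonempty (Fin m) := ⟨⟨0, hm⟩⟩
  rw [satisfiesBalanceLaw_iff_ae_sphereMoment_eq_zero hm,
    ← forall_setIntegral_norm_rpow_smul_eq_zero_iff hΩ hb, finrank_euclideanSpace_fin]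

theorem stmt0 {m : ℕ} (hm : 1 ≤ m) (Ω : Set (EuclideanSpace ℝ (Fin m)))
    (hΩ : IsBody Ω) :
    (∀ α : ℝ, 1 < α →
      (∫ y in Ω, (‖y‖ ^ (α - m - 2) : ℝ) • y) = 0) ↔
    SatisfiesBalanceLaw Ω := by
  obtain ⟨U, -, hU, rfl⟩ := hΩ
  exact stmt0_general hm isClosed_closure.measurableSet hU.closure
end
end

section
/- Let Ω ⊂ ℝ² be a triangle, i.e. the convex hull of three affinely independent points. If Ω satisfies the balance law at the origin, then Ω is an equilateral triangle whose centroid is the origin. -/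
open MeasureTheory Metric Set

noncomputable section

/- Averaging the balance law over all radii shows that the derivative in any fixed direction `w` of
a radial function, being `⟪w, x⟫` times a function of `‖x‖`, has zero integral over the triangle.
If `w` is a side, Fubini and the fundamental theorem of calculus turn this into: every radial
function has the same mean over the other two sides. Hence `‖x‖ ^ 2` has one common distribution on
all three sides. Along a side its maximum is attained at an end point, so comparing maxima gives two
vertices equidistant from the origin. The first two moments then put the third vertex at the same
distance (or at the midpoint of the other two, which is excluded), after which the first moment
makes the sides equal. Now `⟪P, Q⟫` takes one value for all pairs of distinct vertices, so the sum
of the vertices is orthogonal to every side and vanishes. -/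

open scoped NNReal Real RealInnerProductSpace
open AffineMap (lineMap)

variable {F : Type*} [NormedAddCommGroup F] [NormedSpace ℝ F]

section RadialAverages

theorem hausdorffMeasure_circle_lt_top : μH[1] (sphere (0 : ℂ) 1) < ⊤ := by
  have harc := (lipschitzWith_circleMap 0 1).hausdorffMeasure_image_le zero_le_one (Ioc 0 (2 * π))
  rw [image_circleMap_Ioc, abs_one, hausdorffMeasure_real, Real.volume_Ioc] at harc
  exact harc.trans_lt (ENNReal.mul_lt_top (by simp) ENNReal.ofReal_lt_top)

theorem hausdorffMeasure_circle_ne_zero : μH[1] (sphere (0 : ℂ) 1) ≠ 0 := by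
  have hre : LipschitzWith 1 Complex.re := RCLike.lipschitzWith_re (K := ℂ)
  have hproj : Icc (-1) 1 ⊆ Complex.re '' sphere (0 : ℂ) 1 := fun x hx ↦
    ⟨circleMap 0 1 (Real.arccos x), circleMap_mem_sphere 0 zero_le_one _, by
      simp [circleMap, Complex.exp_ofReal_mul_I_re, Real.cos_arccos hx.1 hx.2]⟩
  intro hzero
  have hnull := (measure_mono hproj).trans
    (hre.hausdorffMeasure_image_le zero_le_one (sphere (0 : ℂ) 1))
  rw [hzero, hausdorffMeasure_real, Real.volume_Icc] at hnull
  norm_num at hnull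

theorem quasiMeasurePreserving_norm {E : Type*} [NormedAddCommGroup E] [NormedSpace ℝ E]
    [FiniteDimensional ℝ E] [Nontrivial E] [MeasurableSpace E] [BorelSpace E]
    (μ : Measure E) [μ.IsAddHaarMeasure] :
    Measure.QuasiMeasurePreserving (norm : E → ℝ) μ (volume.restrict (Ici 0)) := by
  refine ⟨measurable_norm, Measure.AbsolutelyContinuous.mk fun N hN hN0 ↦ ?_⟩
  have hradial : (fun y : ℝ ↦ y ^ (Module.finrank ℝ E - 1) • N.indicator (1 : ℝ → ℝ) y)
      =ᵐ[volume.restrict (Ioi 0)] 0 := by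
    have hN0' : ∀ᵐ r ∂volume.restrict (Ioi (0 : ℝ)), r ∉ N :=
      ae_restrict_of_ae_restrict_of_subset Ioi_subset_Ici_self
        (measure_eq_zero_iff_ae_notMem.1 hN0)
    filter_upwards [hN0'] with r hr
    simp [hr]
  have hind : (fun x : E ↦ N.indicator (1 : ℝ → ℝ) ‖x‖) = (norm ⁻¹' N).indicator 1 := rfl
  have hint : IntegrableOn (1 : E → ℝ) (norm ⁻¹' N) μ := by
    rw [← integrable_indicator_iff (measurable_norm hN), ← hind, integrable_fun_norm_addHaar μ]
    exact (integrable_zero _ _ _).congr hradial.symm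
  have hfin : μ (norm ⁻¹' N) ≠ ⊤ :=
    ((integrableOn_const_iff (C := (1 : ℝ)) (by simp)).1 hint |>.resolve_left (by simp)).ne
  have hzero := integral_fun_norm_addHaar μ (N.indicator (1 : ℝ → ℝ))
  rw [integral_congr_ae hradial, hind, integral_indicator_one (measurable_norm hN)] at hzero
  rw [Measure.map_apply measurable_norm hN, ← measureReal_eq_zero_iff hfin]
  simpa using hzero

theorem setIntegral_sphere_comp_linearIsometryEquiv {E E' : Type*}
    [NormedAddCommGroup E] [NormedSpace ℝ E] [MeasurableSpace E] [BorelSpace E]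
    [NormedAddCommGroup E'] [NormedSpace ℝ E'] [MeasurableSpace E'] [BorelSpace E']
    (e : E ≃ₗᵢ[ℝ] E') (d : ℝ) (f : E' → F) :
    ∫ v in sphere (0 : E) 1, f (e v) ∂μH[d] = ∫ w in sphere (0 : E') 1, f w ∂μH[d] := by
  have hsphere : e ⁻¹' sphere 0 1 = sphere 0 1 := by ext; simp
  rw [← hsphere]
  exact (e.toIsometryEquiv.measurePreserving_hausdorffMeasure d).setIntegral_preimage_emb
    e.toHomeomorph.measurableEmbedding f (sphere 0 1)

theorem measurePreserving_mul_left_of_norm_eq_one {v : ℂ} (hv : ‖v‖ = 1) :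
    MeasurePreserving (v * ·) (volume : Measure ℂ) volume :=
  (rotation ⟨v, mem_sphere_zero_iff_norm.2 hv⟩).measurePreserving

theorem integral_comp_mul_left_of_norm_eq_one {v : ℂ} (hv : ‖v‖ = 1) (f : ℂ → F) :
    ∫ x, f (v * x) = ∫ x, f x :=
  (measurePreserving_mul_left_of_norm_eq_one hv).integral_comp
    (measurableEmbedding_mulLeft₀ (norm_ne_zero_iff.1 (by simp [hv]))) f

theorem setIntegral_circle_comp_mul_right (f : ℂ → F) (x : ℂ) :
    ∫ v in sphere (0 : ℂ) 1, f (v * x) ∂μH[1] = ∫ v in sphere (0 : ℂ) 1, f (‖x‖ • v) ∂μH[1] := by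
  rcases eq_or_ne x 0 with rfl | hx
  · simp
  have hx' : (‖x‖ : ℂ) ≠ 0 := by simpa using hx
  let e : ℂ ≃ₗᵢ[ℝ] ℂ := rotation ⟨x / ‖x‖, mem_sphere_zero_iff_norm.2 (by simp [hx])⟩
  have he (v : ℂ) : ‖x‖ • e v = v * x := by
    change ‖x‖ • (x / ‖x‖ * v) = v * x
    rw [Complex.real_smul]
    field_simp
  rw [← setIntegral_sphere_comp_linearIsometryEquiv e 1 (f <| ‖x‖ • ·)]
  simp only [he]

/- For fixed `v` the map `x ↦ v * x` is a rotation of the plane, while for fixed `x` the map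
`v ↦ v * x` is, up to a rotation, the scaling of the circle by `‖x‖`. -/
theorem integral_setIntegral_circle_norm_smul [CompleteSpace F] {f : ℂ → F} (hf : Integrable f) :
    ∫ x : ℂ, ∫ v in sphere (0 : ℂ) 1, f (‖x‖ • v) ∂μH[1] =
      μH[1].real (sphere (0 : ℂ) 1) • ∫ x, f x := by
  let ν : Measure ℂ := μH[1].restrict (sphere 0 1)
  have : IsFiniteMeasure ν := ⟨by simpa [ν] using hausdorffMeasure_circle_lt_top⟩
  have hν : ∀ᵐ v ∂ν, ‖v‖ = 1 := by
    simpa using ae_restrict_mem (μ := μH[1]) (isClosed_sphere (x := (0 : ℂ)) (ε := 1)).measurableSet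
  have hprod : Integrable (Function.uncurry fun v x ↦ f (v * x)) (ν.prod volume) := by
    refine (integrable_prod_iff ?_).2 ⟨?_, ?_⟩
    · refine hf.aestronglyMeasurable.comp_quasiMeasurePreserving
        (QuasiMeasurePreserving.prod_of_right (measurable_fst.mul measurable_snd) ?_)
      filter_upwards [hν] with v hv
      exact (measurePreserving_mul_left_of_norm_eq_one hv).quasiMeasurePreserving
    · filter_upwards [hν] with v hv
      exact (measurePreserving_mul_left_of_norm_eq_one hv).integrable_comp_of_integrable hf
    · refine (integrable_const (∫ x, ‖f x‖)).congr ?_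
      filter_upwards [hν] with v hv
      exact (integral_comp_mul_left_of_norm_eq_one hv fun x ↦ ‖f x‖).symm
  calc ∫ x : ℂ, ∫ v in sphere (0 : ℂ) 1, f (‖x‖ • v) ∂μH[1]
      = ∫ x, ∫ v, f (v * x) ∂ν := by simp only [ν, setIntegral_circle_comp_mul_right]
    _ = ∫ v, (∫ x, f (v * x)) ∂ν := (integral_integral_swap hprod).symm
    _ = ∫ _, (∫ x, f x) ∂ν := by
      refine integral_congr_ae ?_
      filter_upwards [hν] with v hv
      exact integral_comp_mul_left_of_norm_eq_one hv f
    _ = μH[1].real (sphere (0 : ℂ) 1) • ∫ x, f x := by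
      rw [integral_const, measureReal_restrict_apply_univ]

variable {E : Type*} [NormedAddCommGroup E] [InnerProductSpace ℝ E] [FiniteDimensional ℝ E]

/-- An isometric identification of `ℂ` with a Euclidean plane, by which complex multiplication
supplies the rotations of the plane. -/
def complexLinearIsometryEquiv (hE : Module.finrank ℝ E = 2) : ℂ ≃ₗᵢ[ℝ] E :=
  Complex.orthonormalBasisOneI.repr.trans
    ((stdOrthonormalBasis ℝ E).reindex (finCongr hE)).repr.symm

variable [MeasurableSpace E] [BorelSpace E]

theorem hausdorffMeasure_sphere_lt_top (hE : Module.finrank ℝ E = 2) :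
    μH[1] (sphere (0 : E) 1) < ⊤ := by
  rw [← map_zero (complexLinearIsometryEquiv hE), ← LinearIsometryEquiv.image_sphere,
    (complexLinearIsometryEquiv hE).isometry.hausdorffMeasure_image (.inl zero_le_one)]
  exact hausdorffMeasure_circle_lt_top

theorem integral_eq_zero_of_ae_setIntegral_sphere_eq_zero [CompleteSpace F]
    (hE : Module.finrank ℝ E = 2) {f : E → F} (hf : Integrable f)
    (hzero : ∀ᵐ r ∂volume.restrict (Ici (0 : ℝ)),
      ∫ v in sphere (0 : E) 1, f (r • v) ∂μH[1] = 0) :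
    ∫ x, f x = 0 := by
  let e := complexLinearIsometryEquiv hE
  have hcircle : ∀ᵐ x : ℂ, ∫ v in sphere (0 : ℂ) 1, f (e (‖x‖ • v)) ∂μH[1] = 0 := by
    filter_upwards [(quasiMeasurePreserving_norm volume).ae hzero] with x hx
    simpa only [map_smul, setIntegral_sphere_comp_linearIsometryEquiv e 1 (f <| ‖x‖ • ·)] using hx
  have hmean := integral_setIntegral_circle_norm_smul
    (e.measurePreserving.integrable_comp_of_integrable hf)
  simp only [Function.comp_apply] at hmean
  rw [integral_congr_ae hcircle, integral_zero, eq_comm, smul_eq_zero, measureReal_eq_zero_iff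
    hausdorffMeasure_circle_lt_top.ne] at hmean
  rw [← e.measurePreserving.integral_comp e.toHomeomorph.measurableEmbedding]
  exact hmean.resolve_left hausdorffMeasure_circle_ne_zero

theorem SatisfiesBalanceLaw.setIntegral_inner_smul_eq_zero [CompleteSpace F]
    {Ω : Set (EuclideanSpace ℝ (Fin 2))}
    (hbal : SatisfiesBalanceLaw Ω) (hΩ : MeasurableSet Ω) (w : EuclideanSpace ℝ (Fin 2))
    {g : ℝ → F} (hint : IntegrableOn (fun x ↦ ⟪w, x⟫ • g ‖x‖) Ω) :
    ∫ x in Ω, ⟪w, x⟫ • g ‖x‖ = 0 := by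
  have hfin : IsFiniteMeasure (μH[1].restrict (sphere (0 : EuclideanSpace ℝ (Fin 2)) 1)) :=
    ⟨by simpa using hausdorffMeasure_sphere_lt_top finrank_euclideanSpace_fin⟩
  rw [← integral_indicator hΩ]
  refine integral_eq_zero_of_ae_setIntegral_sphere_eq_zero finrank_euclideanSpace_fin
    ((integrable_indicator_iff hΩ).2 hint) ?_
  have hdim : ((2 : ℕ) : ℝ) - 1 = 1 := by norm_num
  rw [SatisfiesBalanceLaw, hdim] at hbal
  filter_upwards [hbal, ae_restrict_mem measurableSet_Ici] with r hr hr0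
  let χ (v : EuclideanSpace ℝ (Fin 2)) : ℝ := Ω.indicator (fun _ ↦ 1) (r • v)
  have hχ : Integrable (fun v ↦ χ v • v) (μH[1].restrict (sphere 0 1)) := by
    have hmeas : Measurable χ := (measurable_const.indicator hΩ).comp (measurable_const_smul r)
    refine .of_bound (hmeas.smul measurable_id).aestronglyMeasurable 1 ?_
    filter_upwards [ae_restrict_mem isClosed_sphere.measurableSet] with v hv
    rw [norm_smul, mem_sphere_zero_iff_norm.1 hv, mul_one]
    exact (norm_indicator_le_norm_self _ _).trans norm_one.le
  calc ∫ v in sphere 0 1, Ω.indicator (fun x ↦ ⟪w, x⟫ • g ‖x‖) (r • v) ∂μH[1]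
      = ∫ v in sphere 0 1, ⟪w, χ v • v⟫ • r • g r ∂μH[1] := by
        refine setIntegral_congr_fun isClosed_sphere.measurableSet fun v hv ↦ ?_
        by_cases hmem : r • v ∈ Ω
        · simp [χ, hmem, inner_smul_right, norm_smul, abs_of_nonneg hr0.out,
            mem_sphere_zero_iff_norm.1 hv, mul_smul, smul_comm r]
        · simp [χ, hmem]
    _ = 0 := by rw [integral_smul_const, integral_inner hχ, hr, inner_zero_right, zero_smul]

end RadialAverages

section Triangle

variable {E : Type*} [NormedAddCommGroup E] [NormedSpace ℝ E] {A B C : E}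

/-- The triangle with vertices `(0, 0)`, `(1, 0)` and `(0, 1)`, which parametrises all triangles. -/
def standardTriangle : Set (ℝ × ℝ) := {p | 0 ≤ p.1 ∧ 0 ≤ p.2 ∧ p.1 + p.2 ≤ 1}

theorem isCompact_standardTriangle : IsCompact standardTriangle := by
  refine isCompact_Icc (a := ((0 : ℝ), (0 : ℝ))) (b := (1, 1)) |>.of_isClosed_subset ?_ ?_
  · exact (isClosed_le continuous_const continuous_fst).inter
      ((isClosed_le continuous_const continuous_snd).inter
        (isClosed_le (continuous_fst.add continuous_snd) continuous_const))
  · rintro ⟨s, t⟩ ⟨hs, ht, hst⟩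
    exact ⟨⟨hs, ht⟩, by dsimp only at *; linarith, by dsimp only at *; linarith⟩

theorem setIntegral_standardTriangle {f : ℝ × ℝ → F} (hf : Continuous f) :
    ∫ p in standardTriangle, f p = ∫ s in (0 : ℝ)..1, ∫ t in (0 : ℝ)..(1 - s), f (s, t) := by
  have hint : Integrable (standardTriangle.indicator f) (volume.prod volume) := by
    rw [← Measure.volume_eq_prod,
      integrable_indicator_iff isCompact_standardTriangle.measurableSet]
    exact hf.continuousOn.integrableOn_compact isCompact_standardTriangle
  have hslice (s : ℝ) : ∫ t, standardTriangle.indicator f (s, t) =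
      (Icc 0 1).indicator (fun s ↦ ∫ t in (0 : ℝ)..(1 - s), f (s, t)) s := by
    by_cases hs : s ∈ Icc (0 : ℝ) 1
    · have hmem (t : ℝ) : (s, t) ∈ standardTriangle ↔ t ∈ Icc 0 (1 - s) := by
        simp [standardTriangle, hs.1, le_sub_iff_add_le, add_comm]
      rw [indicator_of_mem hs, intervalIntegral.integral_of_le (sub_nonneg.2 hs.2),
        ← integral_Icc_eq_integral_Ioc, ← integral_indicator measurableSet_Icc]
      simp only [indicator, hmem]
    · have hnot (t : ℝ) : (s, t) ∉ standardTriangle := fun ⟨hs0, ht, hst⟩ ↦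
        hs ⟨hs0, by dsimp only at *; linarith⟩
      simp [indicator_of_notMem hs, hnot]
  rw [← integral_indicator isCompact_standardTriangle.measurableSet, Measure.volume_eq_prod,
    integral_prod _ hint, intervalIntegral.integral_of_le zero_le_one,
    ← integral_Icc_eq_integral_Ioc, ← integral_indicator measurableSet_Icc]
  simp only [hslice]

variable [FiniteDimensional ℝ E]

theorem exists_equiv_mem_convexHull_iff_mem_standardTriangle (hE : Module.finrank ℝ E = 2)
    (hind : AffineIndependent ℝ ![A, B, C]) :
    ∃ L : (ℝ × ℝ) ≃L[ℝ] E, (∀ p, L p = p.1 • (C - A) + p.2 • (B - A)) ∧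
      ∀ p, A + L p ∈ convexHull ℝ {A, B, C} ↔ p ∈ standardTriangle := by
  let b : AffineBasis (Fin 3) ℝ E :=
    ⟨![A, B, C], hind, hind.affineSpan_eq_top_iff_card_eq_finrank_add_one.2 (by simp [hE])⟩
  let L : ℝ × ℝ →ₗ[ℝ] E :=
    (LinearMap.fst ℝ ℝ ℝ).smulRight (C - A) + (LinearMap.snd ℝ ℝ ℝ).smulRight (B - A)
  have hcoord (p : ℝ × ℝ) (i : Fin 3) :
      b.coord i (A + L p) = ![1 - p.1 - p.2, p.2, p.1] i := by
    have hL : A + L p = (p.1 • (b 2 -ᵥ b 0) + p.2 • (b 1 -ᵥ b 0)) +ᵥ b 0 := add_comm _ _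
    rw [hL, AffineMap.map_vadd, map_add, map_smul, map_smul, AffineMap.linearMap_vsub,
      AffineMap.linearMap_vsub]
    fin_cases i
    · simp only [Fin.zero_eta, ne_eq, Fin.reduceEq, not_false_eq_true, zero_ne_one,
        AffineBasis.coord_apply_ne, AffineBasis.coord_apply_eq, vsub_eq_sub, vadd_eq_add,
        smul_eq_mul, Matrix.cons_val_zero]
      ring
    · simp
    · simp
  have hinj : Function.Injective L := fun p q hpq ↦ by
    have hcoords (i : Fin 3) := (hcoord p i).symm.trans (hpq ▸ hcoord q i)
    exact Prod.ext (hcoords 2) (hcoords 1)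
  refine ⟨(L.linearEquivOfInjective hinj (by simp [hE])).toContinuousLinearEquiv,
    fun p ↦ rfl, fun p ↦ ?_⟩
  have hrange : {A, B, C} = range b := by
    change _ = range ![A, B, C]
    simp only [Matrix.range_cons, Matrix.range_empty, union_empty, singleton_union]
  change A + L p ∈ _ ↔ _
  rw [hrange, b.convexHull_eq_nonneg_coord, mem_ofPred_eq]
  simp only [hcoord]
  refine ⟨fun h ↦ ⟨h 2, h 1, ?_⟩, fun ⟨hs, ht, hst⟩ i ↦ ?_⟩
  · have h0 : 0 ≤ 1 - p.1 - p.2 := h 0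
    linarith
  · fin_cases i
    · exact sub_nonneg.2 (le_sub_iff_add_le'.2 hst)
    · exact ht
    · exact hs

variable [MeasurableSpace E] [BorelSpace E]

theorem exists_setIntegral_convexHull_eq_smul (hE : Module.finrank ℝ E = 2)
    (hind : AffineIndependent ℝ ![A, B, C]) (μ : Measure E) [μ.IsAddHaarMeasure] :
    ∃ c : ℝ≥0, c ≠ 0 ∧ ∀ f : E → F, Continuous f → ∫ x in convexHull ℝ {A, B, C}, f x ∂μ =
      c • ∫ s in (0 : ℝ)..1, ∫ t in (0 : ℝ)..(1 - s), f (A + (s • (C - A) + t • (B - A))) := by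
  obtain ⟨L, hL, hmem⟩ := exists_equiv_mem_convexHull_iff_mem_standardTriangle hE hind
  let ν : Measure E := Measure.map L volume
  obtain ⟨c, hμ⟩ : ∃ c : ℝ≥0, μ = c • ν := ⟨_, μ.isAddLeftInvariant_eq_smul ν⟩
  refine ⟨c, fun hc ↦ NeZero.ne μ (by rw [hμ, hc, zero_smul]), fun f hf ↦ ?_⟩
  have hΩ : MeasurableSet (convexHull ℝ {A, B, C}) :=
    (Set.toFinite {A, B, C}).isCompact_convexHull (𝕜 := ℝ) |>.measurableSet
  have hLemb : MeasurableEmbedding L := L.toHomeomorph.measurableEmbedding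
  have hpre (p : ℝ × ℝ) : (convexHull ℝ {A, B, C}).indicator f (A + L p) =
      standardTriangle.indicator (fun p ↦ f (A + L p)) p := by
    by_cases hp : p ∈ standardTriangle <;> simp [hp, hmem]
  calc ∫ x in convexHull ℝ {A, B, C}, f x ∂μ
      = ∫ x, (convexHull ℝ {A, B, C}).indicator f (A + x) ∂μ := by
        rw [← integral_indicator hΩ, integral_add_left_eq_self]
    _ = c • ∫ p in standardTriangle, f (A + L p) := by
        rw [hμ, integral_smul_nnreal_measure, hLemb.integral_map,
          ← integral_indicator isCompact_standardTriangle.measurableSet]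
        simp only [hpre]
    _ = _ := by
        rw [setIntegral_standardTriangle (by fun_prop)]
        simp only [hL]

theorem integral_lineMap_eq_of_setIntegral_convexHull_eq_zero [CompleteSpace F]
    (hE : Module.finrank ℝ E = 2)
    (hind : AffineIndependent ℝ ![A, B, C]) (μ : Measure E) [μ.IsAddHaarMeasure]
    {f f' : E → F} (hderiv : ∀ x, HasLineDerivAt ℝ f (f' x) x (B - A)) (hf : Continuous f)
    (hf' : Continuous f')
    (hzero : ∫ x in convexHull ℝ {A, B, C}, f' x ∂μ = 0) :
    ∫ t in (0 : ℝ)..1, f (lineMap B C t) = ∫ t in (0 : ℝ)..1, f (lineMap A C t) := by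
  obtain ⟨c, hc, hfubini⟩ := exists_setIntegral_convexHull_eq_smul (F := F) hE hind μ
  rw [hfubini f' hf', smul_eq_zero_iff_right hc] at hzero
  have hftc (s : ℝ) : ∫ t in (0 : ℝ)..(1 - s), f' (A + (s • (C - A) + t • (B - A))) =
      f (lineMap B C s) - f (lineMap A C s) := by
    have hderiv' (t : ℝ) : HasDerivAt (fun t ↦ f (A + s • (C - A) + t • (B - A)))
        (f' (A + (s • (C - A) + t • (B - A)))) t := by
      have h := hderiv (A + (s • (C - A) + t • (B - A)))
      rw [HasLineDerivAt, ← neg_add_cancel t] at h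
      have hshift (u : ℝ) : A + (s • (C - A) + t • (B - A)) + (-t + u) • (B - A) =
          A + s • (C - A) + u • (B - A) := by module
      simpa only [hshift] using h.comp_const_add (-t) t
    rw [intervalIntegral.integral_eq_sub_of_hasDerivAt (fun t _ ↦ hderiv' t)
      (Continuous.intervalIntegrable (by fun_prop) _ _)]
    congr 2 <;> simp only [AffineMap.lineMap_apply_module] <;> module
  simp only [hftc] at hzero
  rw [intervalIntegral.integral_sub (Continuous.intervalIntegrable (by fun_prop) _ _)
    (Continuous.intervalIntegrable (by fun_prop) _ _)] at hzero
  exact sub_eq_zero.1 hzero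

end Triangle

section SqNormLaw

variable {V : Type*} [NormedAddCommGroup V] [InnerProductSpace ℝ V] {P Q R S : V}

/-- The distribution of `‖x‖ ^ 2` when `x` is uniformly distributed on the segment from `P` to
`Q`. -/
def sqNormLaw (P Q : V) : Measure ℝ :=
  (volume.restrict (Ioc 0 1)).map fun t : ℝ ↦ ‖lineMap P Q t‖ ^ 2

theorem integral_sqNormLaw {f : ℝ → F} (hf : Continuous f) (P Q : V) :
    ∫ u, f u ∂sqNormLaw P Q = ∫ t in (0 : ℝ)..1, f (‖lineMap P Q t‖ ^ 2) := by
  rw [sqNormLaw, integral_map (Continuous.aemeasurable (by fun_prop)) hf.aestronglyMeasurable,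
    intervalIntegral.integral_of_le zero_le_one]

theorem sqNormLaw_eq_of_forall_integral_eq
    (h : ∀ ξ : ℝ, ∫ t in (0 : ℝ)..1, Complex.exp (ξ * ‖lineMap P Q t‖ ^ 2 * Complex.I) =
      ∫ t in (0 : ℝ)..1, Complex.exp (ξ * ‖lineMap R S t‖ ^ 2 * Complex.I)) :
    sqNormLaw P Q = sqNormLaw R S := by
  have hfin (P Q : V) : IsFiniteMeasure (sqNormLaw P Q) := by unfold sqNormLaw; infer_instance
  refine Measure.ext_of_charFun (funext fun ξ ↦ ?_)
  simp only [charFun_apply_real]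
  rw [integral_sqNormLaw (by fun_prop), integral_sqNormLaw (by fun_prop)]
  simpa only [Complex.ofReal_pow] using h ξ

theorem sqNormLaw_comm (P Q : V) : sqNormLaw P Q = sqNormLaw Q P := by
  refine sqNormLaw_eq_of_forall_integral_eq fun ξ ↦ ?_
  simpa [AffineMap.lineMap_apply_one_sub] using
    (intervalIntegral.integral_comp_sub_left (a := 0) (b := 1)
    (fun t ↦ Complex.exp (ξ * ‖lineMap P Q t‖ ^ 2 * Complex.I)) 1).symm

theorem norm_lineMap_sq (P Q : V) (t : ℝ) :
    ‖lineMap P Q t‖ ^ 2 = (1 - t) * ‖P‖ ^ 2 + t * ‖Q‖ ^ 2 - t * (1 - t) * ‖P - Q‖ ^ 2 := by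
  rw [AffineMap.lineMap_apply_module, norm_add_sq_real, norm_sub_sq_real, norm_smul, norm_smul,
    inner_smul_left, inner_smul_right, mul_pow, mul_pow, Real.norm_eq_abs, Real.norm_eq_abs,
    sq_abs, sq_abs, starRingEnd_apply, star_trivial]
  ring

theorem ae_le_sqNormLaw_iff {M : ℝ} :
    (∀ᵐ u ∂sqNormLaw P Q, u ≤ M) ↔ max (‖P‖ ^ 2) (‖Q‖ ^ 2) ≤ M := by
  rw [sqNormLaw, ae_map_iff (Continuous.aemeasurable (by fun_prop)) measurableSet_Iic, max_le_iff]
  refine ⟨fun h ↦ ?_, fun hPQ ↦ ?_⟩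
  · have hmax : EqOn (fun t : ℝ ↦ max (‖lineMap P Q t‖ ^ 2) M) (fun _ ↦ M) (Icc 0 1) := by
      refine Measure.eqOn_Icc_of_ae_eq volume zero_ne_one ?_ (by fun_prop) (by fun_prop)
      rw [← restrict_Ioc_eq_restrict_Icc]
      filter_upwards [h] with t ht
      exact max_eq_right ht
    exact ⟨by simpa using hmax (left_mem_Icc.2 zero_le_one),
      by simpa using hmax (right_mem_Icc.2 zero_le_one)⟩
  · filter_upwards [ae_restrict_mem measurableSet_Ioc] with t ⟨ht0, ht1⟩
    rw [norm_lineMap_sq]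
    have ht1' : 0 ≤ 1 - t := sub_nonneg.2 ht1
    have hchord : 0 ≤ t * (1 - t) * ‖P - Q‖ ^ 2 := by positivity
    linarith [mul_le_mul_of_nonneg_left hPQ.1 ht1', mul_le_mul_of_nonneg_left hPQ.2 ht0.le]

theorem max_norm_sq_eq_of_sqNormLaw_eq (h : sqNormLaw P Q = sqNormLaw R S) :
    max (‖P‖ ^ 2) (‖Q‖ ^ 2) = max (‖R‖ ^ 2) (‖S‖ ^ 2) :=
  eq_of_forall_ge_iff fun M ↦ by rw [← ae_le_sqNormLaw_iff, h, ae_le_sqNormLaw_iff]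

theorem integral_sum_mul_pow {n : ℕ} (c : Fin n → ℝ) :
    ∫ t in (0 : ℝ)..1, ∑ i, c i * t ^ (i : ℕ) = ∑ i, c i / (i + 1) := by
  rw [intervalIntegral.integral_finsetSum fun i _ ↦
    Continuous.intervalIntegrable (by fun_prop) _ _]
  simp [div_eq_mul_inv]

theorem integral_id_sqNormLaw (P Q : V) :
    ∫ u, u ∂sqNormLaw P Q = (‖P‖ ^ 2 + ‖Q‖ ^ 2) / 2 - ‖P - Q‖ ^ 2 / 6 := by
  let c := ![‖P‖ ^ 2, ‖Q‖ ^ 2 - ‖P‖ ^ 2 - ‖P - Q‖ ^ 2, ‖P - Q‖ ^ 2]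
  have hc (t : ℝ) : ‖lineMap P Q t‖ ^ 2 = ∑ i, c i * t ^ (i : ℕ) := by
    simp only [c, Fin.sum_univ_three, norm_lineMap_sq, Matrix.cons_val, Fin.val_zero, Fin.val_one,
      Fin.val_two]
    ring
  rw [integral_sqNormLaw (f := fun u ↦ u) continuous_id]
  simp only [hc, integral_sum_mul_pow]
  simp only [c, Fin.sum_univ_three, Matrix.cons_val, Fin.val_zero, Fin.val_one, Fin.val_two,
    Nat.cast_zero, Nat.cast_one, Nat.cast_ofNat]
  ring

theorem integral_sq_sqNormLaw (P Q : V) :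
    ∫ u, u ^ 2 ∂sqNormLaw P Q = (‖P‖ ^ 4 + ‖P‖ ^ 2 * ‖Q‖ ^ 2 + ‖Q‖ ^ 4) / 3
      - (‖P‖ ^ 2 + ‖Q‖ ^ 2) * ‖P - Q‖ ^ 2 / 6 + ‖P - Q‖ ^ 4 / 30 := by
  let b := ‖Q‖ ^ 2 - ‖P‖ ^ 2 - ‖P - Q‖ ^ 2
  let c := ![‖P‖ ^ 4, 2 * ‖P‖ ^ 2 * b, b ^ 2 + 2 * ‖P‖ ^ 2 * ‖P - Q‖ ^ 2, 2 * b * ‖P - Q‖ ^ 2,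
    ‖P - Q‖ ^ 4]
  have hc (t : ℝ) : (‖lineMap P Q t‖ ^ 2) ^ 2 = ∑ i, c i * t ^ (i : ℕ) := by
    simp only [b, c, Fin.sum_univ_five, norm_lineMap_sq, Matrix.cons_val, Fin.coe_ofNat_eq_mod]
    ring
  rw [integral_sqNormLaw (by fun_prop)]
  simp only [hc, integral_sum_mul_pow]
  simp only [b, c, Fin.sum_univ_five, Matrix.cons_val, Fin.coe_ofNat_eq_mod]
  ring

theorem norm_eq_of_norm_eq_of_sqNormLaw_eq (hnorm : ‖P‖ = ‖Q‖) (hPR : sqNormLaw P Q = sqNormLaw P R)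
    (hQR : sqNormLaw P Q = sqNormLaw Q R) (hR : R ≠ midpoint ℝ P Q) : ‖R‖ = ‖P‖ := by
  have hmeanP := congrArg (fun μ ↦ ∫ u, u ∂μ) hPR
  have hmeanQ := congrArg (fun μ ↦ ∫ u, u ∂μ) hQR
  have hsq := congrArg (fun μ ↦ ∫ u, u ^ 2 ∂μ) hPR
  simp only [integral_id_sqNormLaw, integral_sq_sqNormLaw, ← hnorm] at hmeanP hmeanQ hsq
  have hlegs : ‖Q - R‖ ^ 2 = ‖P - R‖ ^ 2 := by linarith
  have hbase : ‖P - Q‖ ^ 2 = 3 * (‖P‖ ^ 2 - ‖R‖ ^ 2) + ‖P - R‖ ^ 2 := by linarith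
  have hcases : (‖P‖ ^ 2 - ‖R‖ ^ 2) * (‖P - R‖ ^ 2 - (‖P‖ ^ 2 - ‖R‖ ^ 2)) = 0 := by
    linear_combination 30 * hsq -
      (‖P - Q‖ ^ 2 + 3 * (‖P‖ ^ 2 - ‖R‖ ^ 2) + ‖P - R‖ ^ 2 - 10 * ‖P‖ ^ 2) * hbase
  have hfar : ‖P - R‖ ^ 2 - (‖P‖ ^ 2 - ‖R‖ ^ 2) ≠ 0 := by
    intro hapex
    have hpar := parallelogram_law_with_norm ℝ (P - R) (Q - R)
    rw [sub_sub_sub_cancel_right, hlegs, hbase] at hpar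
    have hsum : P - R + (Q - R) = 0 := by
      rw [← norm_eq_zero, ← sq_eq_zero_iff]
      linarith
    refine hR ?_
    rw [midpoint_eq_smul_add, invOf_eq_inv]
    linear_combination (norm := module) (-2⁻¹ : ℝ) • hsum
  exact (sq_eq_sq₀ (norm_nonneg _) (norm_nonneg _)).1
    (sub_eq_zero.1 ((mul_eq_zero_iff_right hfar).1 hcases)).symm

theorem ne_midpoint_of_not_collinear (h : ¬ Collinear ℝ {P, Q, R}) : R ≠ midpoint ℝ P Q := by
  rintro rfl
  exact h (pair_comm Q (midpoint ℝ P Q) ▸ (wbtw_midpoint ℝ P Q).collinear)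

theorem norms_eq_of_not_collinear_of_sqNormLaw_eq {A B C : V} (hncol : ¬ Collinear ℝ {A, B, C})
    (hAB : sqNormLaw A B = sqNormLaw B C) (hBC : sqNormLaw B C = sqNormLaw C A) :
    ‖A‖ = ‖B‖ ∧ ‖B‖ = ‖C‖ := by
  have hncol' : ¬ Collinear ℝ {B, C, A} := by rwa [pair_comm, insert_comm]
  have hncol'' : ¬ Collinear ℝ {C, A, B} := by rwa [insert_comm, pair_comm]
  have hCA := hAB.trans hBC
  have htwo : ‖A‖ ^ 2 = ‖B‖ ^ 2 ∨ ‖B‖ ^ 2 = ‖C‖ ^ 2 ∨ ‖C‖ ^ 2 = ‖A‖ ^ 2 := by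
    have hmaxAB := max_norm_sq_eq_of_sqNormLaw_eq hAB
    have hmaxBC := max_norm_sq_eq_of_sqNormLaw_eq hBC
    grind
  simp only [sq_eq_sq₀ (norm_nonneg _) (norm_nonneg _)] at htwo
  rcases htwo with h | h | h
  · have hC := norm_eq_of_norm_eq_of_sqNormLaw_eq h (hCA.trans (sqNormLaw_comm C A)) hAB
      (ne_midpoint_of_not_collinear hncol)
    exact ⟨h, h.symm.trans hC.symm⟩
  · have hA := norm_eq_of_norm_eq_of_sqNormLaw_eq h (hAB.symm.trans (sqNormLaw_comm A B)) hBC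
      (ne_midpoint_of_not_collinear hncol')
    exact ⟨hA, h⟩
  · have hB := norm_eq_of_norm_eq_of_sqNormLaw_eq h (hBC.symm.trans (sqNormLaw_comm B C)) hCA.symm
      (ne_midpoint_of_not_collinear hncol'')
    exact ⟨(hB.trans h).symm, hB⟩

theorem dist_eq_dist_of_sqNormLaw_eq (hPQ : ‖P‖ = ‖Q‖) (hRS : ‖R‖ = ‖S‖) (hPR : ‖P‖ = ‖R‖)
    (h : sqNormLaw P Q = sqNormLaw R S) : dist P Q = dist R S := by
  have hmean := congrArg (fun μ ↦ ∫ u, u ∂μ) h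
  simp only [integral_id_sqNormLaw, ← hPQ, ← hRS, ← hPR] at hmean
  rw [dist_eq_norm, dist_eq_norm, ← sq_eq_sq₀ (norm_nonneg _) (norm_nonneg _)]
  linarith

end SqNormLaw

section BalancedTriangle

variable {A B C : EuclideanSpace ℝ (Fin 2)}

theorem hasLineDerivAt_cexp_norm_sq {V : Type*} [NormedAddCommGroup V] [InnerProductSpace ℝ V]
    (ξ : ℝ) (x w : V) :
    HasLineDerivAt ℝ (fun x : V ↦ Complex.exp (ξ * ‖x‖ ^ 2 * Complex.I))
      (⟪w, x⟫ • (2 * ξ * Complex.I * Complex.exp (ξ * ‖x‖ ^ 2 * Complex.I))) x w := by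
  have hsq : HasDerivAt (fun t : ℝ ↦ ‖x + t • w‖ ^ 2) (2 * ⟪w, x⟫) 0 := by
    have hline : HasDerivAt (fun t : ℝ ↦ x + t • w) w 0 := by
      simpa using ((hasDerivAt_id (0 : ℝ)).smul_const w).const_add x
    simpa [real_inner_comm] using hline.norm_sq
  have hexp := ((hsq.ofReal_comp.const_mul (ξ : ℂ)).mul_const Complex.I).cexp
  simp only [Complex.ofReal_pow, zero_smul, add_zero] at hexp
  refine hexp.congr_deriv ?_
  rw [Complex.real_smul]
  push_cast
  ring

theorem SatisfiesBalanceLaw.sqNormLaw_eq (hind : AffineIndependent ℝ ![A, B, C])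
    (hbal : SatisfiesBalanceLaw (convexHull ℝ {A, B, C})) :
    sqNormLaw B C = sqNormLaw A C := by
  refine sqNormLaw_eq_of_forall_integral_eq fun ξ ↦ ?_
  let g (r : ℝ) : ℂ := 2 * ξ * Complex.I * Complex.exp (ξ * r ^ 2 * Complex.I)
  have hcompact : IsCompact (convexHull ℝ {A, B, C}) :=
    (Set.toFinite {A, B, C}).isCompact_convexHull (𝕜 := ℝ)
  have hcont : Continuous fun x : EuclideanSpace ℝ (Fin 2) ↦ ⟪B - A, x⟫ • g ‖x‖ := by fun_prop
  exact integral_lineMap_eq_of_setIntegral_convexHull_eq_zero finrank_euclideanSpace_fin hind volume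
    (fun x ↦ hasLineDerivAt_cexp_norm_sq ξ x (B - A)) (by fun_prop) hcont
    (hbal.setIntegral_inner_smul_eq_zero hcompact.measurableSet (B - A)
      (hcont.continuousOn.integrableOn_compact hcompact))

end BalancedTriangle

theorem sum_eq_zero_of_norm_eq_of_dist_eq {V ι : Type*} [NormedAddCommGroup V]
    [InnerProductSpace ℝ V] [Fintype ι] {p : ι → V} (hspan : vectorSpan ℝ (range p) = ⊤)
    {ρ d : ℝ} (hnorm : ∀ i, ‖p i‖ = ρ) (hdist : Pairwise fun i j ↦ dist (p i) (p j) = d) :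
    ∑ i, p i = 0 := by
  classical
  have hinner (i j : ι) : ⟪p j, p i⟫ = ρ ^ 2 - d ^ 2 / 2 + if j = i then d ^ 2 / 2 else 0 := by
    split_ifs with hij
    · rw [hij, real_inner_self_eq_norm_sq, hnorm, sub_add_cancel]
    · have h := norm_sub_sq_real (p j) (p i)
      rw [← dist_eq_norm, hdist hij, hnorm, hnorm] at h
      linarith
  have horth : innerₛₗ ℝ (∑ k, p k) = 0 := by
    refine LinearMap.ext_on hspan ?_
    rintro _ ⟨_, ⟨i, rfl⟩, _, ⟨j, rfl⟩, rfl⟩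
    simp [inner_sub_right, hinner]
  exact inner_self_eq_zero.1 (LinearMap.congr_fun horth _)

theorem add_add_eq_zero_of_norm_eq_of_dist_eq {V : Type*} [NormedAddCommGroup V]
    [InnerProductSpace ℝ V] {A B C : V} (hspan : vectorSpan ℝ (range ![A, B, C]) = ⊤)
    (hAB : ‖A‖ = ‖B‖) (hBC : ‖B‖ = ‖C‖) (hdist : dist A B = dist B C)
    (hdist' : dist B C = dist C A) : A + B + C = 0 := by
  have hpair : Pairwise fun i j ↦ dist (![A, B, C] i) (![A, B, C] j) = dist A B := by
    simp [Pairwise, Fin.forall_fin_succ, dist_comm B A, dist_comm C B, dist_comm A C, hdist,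
      hdist']
  simpa [Fin.sum_univ_three] using sum_eq_zero_of_norm_eq_of_dist_eq hspan (ρ := ‖A‖)
    (by simp [Fin.forall_fin_succ, hAB, hBC]) hpair

theorem stmt6 (A B C : EuclideanSpace ℝ (Fin 2))
    (hind : AffineIndependent ℝ ![A, B, C])
    (hbal : SatisfiesBalanceLaw (convexHull ℝ {A, B, C})) :
    dist A B = dist B C ∧ dist B C = dist C A ∧
      (3 : ℝ)⁻¹ • (A + B + C) = 0 := by
  have hncol : ¬ Collinear ℝ {A, B, C} := affineIndependent_iff_not_collinear_set.1 hind
  have hlaw' : sqNormLaw B C = sqNormLaw C A := by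
    rw [hbal.sqNormLaw_eq hind, sqNormLaw_comm]
  have hlaw : sqNormLaw A B = sqNormLaw B C := by
    rw [pair_comm] at hbal
    rw [← hbal.sqNormLaw_eq hind.comm_right, sqNormLaw_comm]
  obtain ⟨hAB, hBC⟩ := norms_eq_of_not_collinear_of_sqNormLaw_eq hncol hlaw hlaw'
  have hdist : dist A B = dist B C := dist_eq_dist_of_sqNormLaw_eq hAB hBC hAB hlaw
  have hdist' : dist B C = dist C A :=
    dist_eq_dist_of_sqNormLaw_eq hBC (hAB.trans hBC).symm hBC hlaw'
  have hspan : vectorSpan ℝ (range ![A, B, C]) = ⊤ :=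
    hind.vectorSpan_eq_top_of_card_eq_finrank_add_one (by simp)
  refine ⟨hdist, hdist', ?_⟩
  rw [add_add_eq_zero_of_norm_eq_of_dist_eq hspan hAB hBC hdist hdist', smul_zero]
end
end
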